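/- There exist a constant c > 0 and n₀ such that for all n ≥ n₀ and every nonzero vector v ∈ F₂ⁿ of even Hamming weight, the number of independent sets in the graph Qₙ ∪ Γ_{F₂ⁿ}(v) (the graph on vertex set F₂ⁿ in which x and y are adjacent iff x+y has Hamming weight 1 or x+y = v) is at most 2^(2^(n−1) − 2^(n/2 − c·√n)). -/

import Mathlib

/-- `V n` is the vector space `F₂ⁿ`. -/
abbrev V (n : ℕ) : Type := Fin n → ZMod 2

/-- The graph `Qₙ ∪ Γ_{F₂ⁿ}(v)`: `x` and `y` are adjacent iff `x + y` has Hamming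
weight `1` or `x + y = v` (with `x ≠ y`). -/
def QCay (n : ℕ) (v : V n) : SimpleGraph (V n) :=
  SimpleGraph.fromRel (fun x y => hammingDist x y = 1 ∨ x + y = v)

/-!
The even and the odd vertices of `Qₙ` are both copies of `F₂ⁿ⁻¹`, and an independent set of `Qₙ`
becomes a pair `(A, B)` of subsets of `F₂ⁿ⁻¹` such that no element of `B` has a closed neighbour in
`A`. As `v` is even, its matching becomes the matching `u ~ u + z` in each of the two copies.

Let `F` be the set of vertices without closed neighbours in `A`. If `F` or its own set of
non-neighbours is small, then one of `A`, `B` is small, and the other one avoids the matching, which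
leaves at most `3 ^ (N / 2)` choices in `F₂ⁿ⁻¹`, where `N = 2 ^ (n - 1)`. Otherwise Talagrand's
inequality for the sum of the square roots of the boundary degrees shows that at least
`N / (200 * √n)` vertices are missing from the maximal pair enclosing `(A, B)`, and Sapozhenko's
graph containers bound the number of pairs with `t` missing vertices by about
`2 ^ N * exp (-t / s)`, where `s` is of order `log n`.
-/

open Finset

section SubsetCounts

variable {α : Type*} [Fintype α]

/-- The subsets of `α` with at most `k` elements. -/
def smallSets (α : Type*) [Fintype α] (k : ℕ) : Finset (Finset α) := {S | #S ≤ k}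

theorem mem_smallSets {k : ℕ} {S : Finset α} : S ∈ smallSets α k ↔ #S ≤ k := by
  simp [smallSets]

theorem card_smallSets_mul_pow_le {x : ℝ} (hx₀ : 0 ≤ x) (hx₁ : x ≤ 1) (k : ℕ) :
    #(smallSets α k) * x ^ k ≤ (x + 1) ^ Fintype.card α := by
  calc #(smallSets α k) * x ^ k = ∑ _S ∈ smallSets α k, x ^ k := by
        rw [sum_const, nsmul_eq_mul]
    _ ≤ ∑ S ∈ smallSets α k, x ^ #S :=
        sum_le_sum fun S hS ↦ pow_le_pow_of_le_one hx₀ hx₁ (mem_smallSets.1 hS)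
    _ ≤ ∑ S : Finset α, x ^ #S :=
        sum_le_sum_of_subset_of_nonneg (subset_univ _) fun S _ _ ↦ pow_nonneg hx₀ _
    _ = (x + 1) ^ Fintype.card α := by
        simpa only [one_pow, mul_one] using Fintype.sum_pow_mul_eq_add_pow α x 1

theorem card_smallSets_le_exp {q : ℝ} (hq : 1 ≤ q) (k : ℕ) :
    (#(smallSets α k) : ℝ) ≤ Real.exp (k * Real.log q + Fintype.card α / q) := by
  have hq₀ : 0 < q := by linarith
  have hcount := card_smallSets_mul_pow_le (α := α) (inv_nonneg.2 hq₀.le)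
    (inv_le_one_of_one_le₀ hq) k
  rw [inv_pow, ← div_eq_mul_inv, div_le_iff₀ (by positivity)] at hcount
  calc (#(smallSets α k) : ℝ) ≤ (q⁻¹ + 1) ^ Fintype.card α * q ^ k := hcount
    _ ≤ Real.exp q⁻¹ ^ Fintype.card α * q ^ k := by
        gcongr
        exact Real.add_one_le_exp _
    _ = Real.exp (k * Real.log q + Fintype.card α / q) := by
        rw [Real.exp_add, Real.exp_nat_mul, Real.exp_log hq₀, div_eq_mul_inv, Real.exp_nat_mul,
          mul_comm]

theorem exists_transversal_of_involutive {α : Type*} [Finite α] {σ : α → α}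
    (hσ : Function.Involutive σ) (hfix : ∀ u, σ u ≠ u) :
    ∃ R : Finset α, ∀ u, σ u ∈ R ↔ u ∉ R := by
  have := Fintype.ofFinite α
  let e := Fintype.equivFin α
  refine ⟨univ.filter fun u ↦ e u < e (σ u), fun u ↦ ?_⟩
  have hne : e (σ u) ≠ e u := e.injective.ne (hfix u)
  simp only [mem_filter_univ, hσ u, not_lt]
  exact ⟨le_of_lt, fun h ↦ lt_of_le_of_ne h hne⟩

variable {σ : α → α}

theorem two_mul_card_transversal (hσ : Function.Involutive σ) {R : Finset α}
    (hR : ∀ u, σ u ∈ R ↔ u ∉ R) : 2 * #R = Fintype.card α := by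
  classical
  have himage : R.image σ = Rᶜ := by
    ext u
    rw [mem_compl, ← hR, mem_image]
    exact ⟨by rintro ⟨w, hw, rfl⟩; rwa [hσ w], fun h ↦ ⟨σ u, h, hσ u⟩⟩
  have hcard := card_compl_add_card R
  rw [← himage, card_image_of_injective _ hσ.injective] at hcard
  omega

variable [DecidableEq α]

/-- The sets containing no pair `{u, σ u}`: for a fixed-point-free involution `σ`, the independent
sets of the perfect matching `u ~ σ u`. -/
def matchingFreeSets (σ : α → α) : Finset (Finset α) := {A | ∀ u ∈ A, σ u ∉ A}

theorem mem_matchingFreeSets {A : Finset α} : A ∈ matchingFreeSets σ ↔ ∀ u ∈ A, σ u ∉ A := by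
  simp [matchingFreeSets]

theorem card_matchingFreeSets_le (hσ : Function.Involutive σ) {R : Finset α}
    (hR : ∀ u, σ u ∈ R ↔ u ∉ R) : #(matchingFreeSets σ) ≤ 3 ^ #R := by
  -- A matching-free set meets each matching edge in one of three ways.
  let trace (A : Finset α) (u : R) : Option Bool :=
    if ↑u ∈ A then some true else if σ u ∈ A then some false else none
  have trace_injOn : Set.InjOn trace (matchingFreeSets σ) := by
    intro A hA B hB htrace
    rw [mem_coe, mem_matchingFreeSets] at hA hB
    have hagree : ∀ u ∈ R, (u ∈ A ↔ u ∈ B) ∧ (σ u ∈ A ↔ σ u ∈ B) := by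
      intro u hu
      have hu' := congrFun htrace ⟨u, hu⟩
      simp only [trace] at hu'
      have := hA u
      have := hB u
      split_ifs at hu' <;> simp_all
    ext u
    by_cases hu : u ∈ R
    · exact (hagree u hu).1
    · simpa only [hσ u] using (hagree (σ u) ((hR u).2 hu)).2
  calc #(matchingFreeSets σ) ≤ #(univ : Finset (R → Option Bool)) :=
        card_le_card_of_injOn trace (fun _ _ ↦ mem_coe.2 (mem_univ _)) trace_injOn
    _ = 3 ^ #R := by simp

theorem card_matchingFreeSets_sq_le (hσ : Function.Involutive σ) (hfix : ∀ u, σ u ≠ u) :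
    #(matchingFreeSets σ) ^ 2 ≤ 3 ^ Fintype.card α := by
  obtain ⟨R, hR⟩ := exists_transversal_of_involutive hσ hfix
  calc #(matchingFreeSets σ) ^ 2 ≤ (3 ^ #R) ^ 2 :=
        Nat.pow_le_pow_left (card_matchingFreeSets_le hσ hR) 2
    _ = 3 ^ Fintype.card α := by
        rw [← pow_mul, mul_comm, two_mul_card_transversal hσ hR]

theorem exists_subset_card_sdiff_biUnion_lt {β : Type*} (nb : β → Finset α)
    (A : Finset β) {ψ : ℕ} (hψ : 0 < ψ) :
    ∃ T ⊆ A, ψ * #T ≤ Fintype.card α ∧ ∀ x ∈ A, #(nb x \ T.biUnion nb) < ψ := by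
  classical
  obtain ⟨T, hT, hmax⟩ := exists_max_image {T ∈ A.powerset | ψ * #T ≤ #(T.biUnion nb)} card
    ⟨∅, by simp⟩
  simp only [mem_filter, mem_powerset] at hT hmax
  refine ⟨T, hT.1, hT.2.trans (card_le_univ _), fun x hx ↦ ?_⟩
  by_contra! hnew
  have hxT : x ∉ T := fun hxT ↦ by
    rw [sdiff_eq_empty_iff_subset.2 (subset_biUnion_of_mem nb hxT), card_empty] at hnew
    omega
  have hcover : ψ * #(insert x T) ≤ #((insert x T).biUnion nb) := by
    rw [card_insert_of_notMem hxT, biUnion_insert, ← card_sdiff_add_card, mul_add]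
    omega
  have hle := hmax (insert x T) ⟨insert_subset hx hT.1, hcover⟩
  rw [card_insert_of_notMem hxT] at hle
  omega

end SubsetCounts

section RegularGraphs

variable {α : Type*} {nb : α → Finset α} {d : ℕ}

/-- `nb` is the neighbourhood map of a `d`-regular graph on `α` in which loops are allowed. Two
sets `A`, `B` without edges between them amount to an independent set of its bipartite double
cover. -/
structure IsRegularNbhd (nb : α → Finset α) (d : ℕ) : Prop where
  symm : ∀ x y, y ∈ nb x → x ∈ nb y
  card_eq : ∀ x, #(nb x) = d

variable [DecidableEq α]

/-- The number of pairs `(x, y) ∈ X × Y` with `y` a neighbour of `x`. -/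
def edgesBetween (nb : α → Finset α) (X Y : Finset α) : ℕ := ∑ x ∈ X, #(nb x ∩ Y)

theorem edgesBetween_comm (hs : ∀ x y, y ∈ nb x → x ∈ nb y) (X Y : Finset α) :
    edgesBetween nb X Y = edgesBetween nb Y X := by
  have hcount := sum_card_bipartiteAbove_eq_sum_card_bipartiteBelow (s := X) (t := Y)
    fun x y ↦ y ∈ nb x
  unfold edgesBetween
  convert hcount using 3 with x _ y
  · ext y
    simp [bipartiteAbove, and_comm]
  · ext x
    have : x ∈ nb y ↔ y ∈ nb x := ⟨hs y x, hs x y⟩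
    simp [bipartiteBelow, this, and_comm]

theorem edgesBetween_mono {X X' Y Y' : Finset α} (hX : X ⊆ X') (hY : Y ⊆ Y') :
    edgesBetween nb X Y ≤ edgesBetween nb X' Y' :=
  (sum_le_sum fun _ _ ↦ card_le_card (inter_subset_inter_left hY)).trans
    (sum_le_sum_of_subset hX)

theorem edgesBetween_le_mul_card {X Y : Finset α} {ψ : ℕ} (h : ∀ x ∈ X, #(nb x ∩ Y) ≤ ψ) :
    edgesBetween nb X Y ≤ ψ * #X := by
  rw [mul_comm]
  exact sum_le_card_nsmul X _ ψ h

variable [Fintype α]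

/-- The vertices with no neighbour in `A`. -/
def nonNbrs (nb : α → Finset α) (A : Finset α) : Finset α := {y | Disjoint (nb y) A}

theorem mem_nonNbrs {A : Finset α} {y : α} : y ∈ nonNbrs nb A ↔ Disjoint (nb y) A := by
  simp [nonNbrs]

theorem subset_nonNbrs_comm (hs : ∀ x y, y ∈ nb x → x ∈ nb y) {A B : Finset α} :
    A ⊆ nonNbrs nb B ↔ B ⊆ nonNbrs nb A := by
  have imp {A B : Finset α} (h : A ⊆ nonNbrs nb B) : B ⊆ nonNbrs nb A := fun y hy ↦
    mem_nonNbrs.2 <| disjoint_left.2 fun x hxy hx ↦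
      disjoint_left.1 (mem_nonNbrs.1 (h hx)) (hs y x hxy) hy
  exact ⟨imp, imp⟩

theorem subset_nonNbrs_nonNbrs (hs : ∀ x y, y ∈ nb x → x ∈ nb y) (A : Finset α) :
    A ⊆ nonNbrs nb (nonNbrs nb A) :=
  (subset_nonNbrs_comm hs).1 Subset.rfl

theorem nonNbrs_anti {A B : Finset α} (h : A ⊆ B) : nonNbrs nb B ⊆ nonNbrs nb A := fun _ hy ↦
  mem_nonNbrs.2 ((mem_nonNbrs.1 hy).mono_right h)

theorem nonNbrs_nonNbrs_nonNbrs (hs : ∀ x y, y ∈ nb x → x ∈ nb y) (A : Finset α) :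
    nonNbrs nb (nonNbrs nb (nonNbrs nb A)) = nonNbrs nb A :=
  (nonNbrs_anti (subset_nonNbrs_nonNbrs hs A)).antisymm (subset_nonNbrs_nonNbrs hs _)

theorem disjoint_biUnion_of_subset_nonNbrs {T F : Finset α} (h : T ⊆ nonNbrs nb F) :
    Disjoint (T.biUnion nb) F :=
  (disjoint_biUnion_left _ _ _).2 fun _ hu ↦ mem_nonNbrs.1 (h hu)

theorem edgesBetween_eq_zero {X Y : Finset α} (h : X ⊆ nonNbrs nb Y) :
    edgesBetween nb X Y = 0 :=
  sum_eq_zero fun _ hx ↦ card_eq_zero.2 (disjoint_iff_inter_eq_empty.1 (mem_nonNbrs.1 (h hx)))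

theorem IsRegularNbhd.edgesBetween_add_edgesBetween_compl (h : IsRegularNbhd nb d)
    (X Y : Finset α) : edgesBetween nb X Y + edgesBetween nb X Yᶜ = d * #X := by
  have hx : ∀ x ∈ X, #(nb x ∩ Y) + #(nb x ∩ Yᶜ) = d := fun x _ ↦ by
    rw [← sdiff_eq_inter_compl, card_inter_add_card_sdiff, h.card_eq]
  rw [edgesBetween, edgesBetween, ← sum_add_distrib, sum_congr rfl hx, sum_const, smul_eq_mul,
    mul_comm]

theorem IsRegularNbhd.edgesBetween_compl_add (h : IsRegularNbhd nb d) (X Y : Finset α) :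
    edgesBetween nb Xᶜ Yᶜ + d * (#X + #Y) = d * Fintype.card α + edgesBetween nb X Y := by
  have hX := h.edgesBetween_add_edgesBetween_compl X Y
  have hY := h.edgesBetween_add_edgesBetween_compl Yᶜ X
  rw [edgesBetween_comm h.symm Yᶜ X, edgesBetween_comm h.symm Yᶜ Xᶜ] at hY
  rw [← card_compl_add_card Y, mul_add, mul_add]
  omega

theorem IsRegularNbhd.card_add_card_le (h : IsRegularNbhd nb d) (hd : 0 < d) {X Y : Finset α}
    (hXY : X ⊆ nonNbrs nb Y) : #X + #Y ≤ Fintype.card α := by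
  have hcount := h.edgesBetween_compl_add X Y
  rw [edgesBetween_eq_zero hXY] at hcount
  exact Nat.le_of_mul_le_mul_left (by omega) hd

/-- The number of vertices missing from the maximal pair `(nonNbrs (nonNbrs A), nonNbrs A)` of sets
without edges between them. The subtraction does not truncate: see
`IsRegularNbhd.card_add_card_add_defect`. -/
def defect (nb : α → Finset α) (A : Finset α) : ℕ :=
  Fintype.card α - (#(nonNbrs nb (nonNbrs nb A)) + #(nonNbrs nb A))

theorem IsRegularNbhd.card_add_card_add_defect (h : IsRegularNbhd nb d) (hd : 0 < d)
    (A : Finset α) :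
    #(nonNbrs nb (nonNbrs nb A)) + #(nonNbrs nb A) + defect nb A = Fintype.card α :=
  Nat.add_sub_cancel' (h.card_add_card_le hd Subset.rfl)

end RegularGraphs

section Containers

variable {α : Type*} [Fintype α] [DecidableEq α] {nb : α → Finset α} {d ψ t : ℕ}
  {A F T T' : Finset α}

/-- The container of Sapozhenko's graph-container method determined by the fingerprints `T` and
`T'`: the vertices with no neighbour in `T'` and with fewer than `ψ` neighbours outside the
neighbourhood of `T`. If `T ⊆ A` and `T' ⊆ F` are fingerprints of a pair `(A, F)` without edges
between them, then `A ⊆ container nb ψ T T'` and `F ⊆ container nb ψ T' T`. -/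
def container (nb : α → Finset α) (ψ : ℕ) (T T' : Finset α) : Finset α :=
  {x | x ∉ T'.biUnion nb ∧ #(nb x \ T.biUnion nb) < ψ}

theorem mem_container {x : α} :
    x ∈ container nb ψ T T' ↔ x ∉ T'.biUnion nb ∧ #(nb x \ T.biUnion nb) < ψ := by
  simp [container]

theorem subset_container (hs : ∀ x y, y ∈ nb x → x ∈ nb y) (hAF : A ⊆ nonNbrs nb F)
    (hT' : T' ⊆ F) (hT : ∀ x ∈ A, #(nb x \ T.biUnion nb) < ψ) : A ⊆ container nb ψ T T' := by
  have hdisj : Disjoint (T'.biUnion nb) A :=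
    disjoint_biUnion_of_subset_nonNbrs (hT'.trans ((subset_nonNbrs_comm hs).1 hAF))
  exact fun x hx ↦ mem_container.2 ⟨disjoint_right.1 hdisj hx, hT x hx⟩

theorem card_nb_inter_container_le {x : α} (hx : x ∈ container nb ψ T T') :
    #(nb x ∩ container nb ψ T' T) ≤ ψ := by
  refine (card_le_card fun y hy ↦ ?_).trans (mem_container.1 hx).2.le
  rw [mem_inter] at hy
  exact mem_sdiff.2 ⟨hy.1, (mem_container.1 hy.2).1⟩

/-- A vertex of `D \ A` has at least half of its neighbours in `Fᶜ`, because `Fᶜ` contains the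
neighbourhood of `T`; but only `d * t` edges join `Aᶜ` to `Fᶜ`. -/
theorem IsRegularNbhd.card_sdiff_le_two_mul (h : IsRegularNbhd nb d) (hd : 0 < d) (hψ : 2 * ψ ≤ d)
    (hAF : A ⊆ nonNbrs nb F) (ht : #A + #F + t = Fintype.card α) (hTA : T ⊆ A) {D : Finset α}
    (hD : ∀ x ∈ D, #(nb x \ T.biUnion nb) < ψ) : #(D \ A) ≤ 2 * t := by
  have hdisj : Disjoint (T.biUnion nb) F := disjoint_biUnion_of_subset_nonNbrs (hTA.trans hAF)
  have hdeg : ∀ x ∈ D \ A, d ≤ 2 * #(nb x ∩ Fᶜ) := by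
    intro x hx
    have hsub : nb x ∩ F ⊆ nb x \ T.biUnion nb := fun y hy ↦
      mem_sdiff.2 ⟨(mem_inter.1 hy).1, disjoint_right.1 hdisj (mem_inter.1 hy).2⟩
    have hlt := (card_le_card hsub).trans_lt (hD x (mem_sdiff.1 hx).1)
    have hsplit := card_inter_add_card_sdiff (nb x) F
    rw [h.card_eq, sdiff_eq_inter_compl] at hsplit
    omega
  have hedges : edgesBetween nb Aᶜ Fᶜ = d * t := by
    have hcount := h.edgesBetween_compl_add A F
    rw [edgesBetween_eq_zero hAF, ← ht, mul_add d _ t] at hcount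
    omega
  refine Nat.le_of_mul_le_mul_left ?_ hd
  calc d * #(D \ A) ≤ ∑ x ∈ D \ A, 2 * #(nb x ∩ Fᶜ) := by
        rw [mul_comm]
        exact card_nsmul_le_sum _ _ _ hdeg
    _ = 2 * edgesBetween nb (D \ A) Fᶜ := (mul_sum ..).symm
    _ ≤ 2 * edgesBetween nb Aᶜ Fᶜ := by
        gcongr
        exact edgesBetween_mono (fun x hx ↦ mem_compl.2 (mem_sdiff.1 hx).2) Subset.rfl
    _ = d * (2 * t) := by rw [hedges]; ring

theorem edgesBetween_le_of_subset_nonNbrs (hs : ∀ x y, y ∈ nb x → x ∈ nb y) {D E : Finset α}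
    (hAF : A ⊆ nonNbrs nb F) (hD : ∀ x ∈ D, #(nb x ∩ E) ≤ ψ) (hE : ∀ y ∈ E, #(nb y ∩ D) ≤ ψ) :
    edgesBetween nb D E ≤ ψ * (#(D \ A) + #(E \ F)) := by
  have hinside : edgesBetween nb (D ∩ A) E ≤ edgesBetween nb (D ∩ A) (E \ F) := by
    refine sum_le_sum fun x hx ↦ card_le_card fun y hy ↦ ?_
    have hxF := mem_nonNbrs.1 (hAF (mem_inter.1 hx).2)
    rw [mem_inter] at hy
    exact mem_inter.2 ⟨hy.1, mem_sdiff.2 ⟨hy.2, disjoint_left.1 hxF hy.1⟩⟩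
  calc edgesBetween nb D E = edgesBetween nb (D \ A) E + edgesBetween nb (D ∩ A) E := by
        rw [edgesBetween, edgesBetween, edgesBetween, ← sum_union (disjoint_sdiff_inter D A),
          sdiff_union_inter]
    _ ≤ edgesBetween nb (D \ A) E + edgesBetween nb (E \ F) D := by
        rw [edgesBetween_comm hs (E \ F)]
        gcongr
        exact hinside.trans (edgesBetween_mono inter_subset_left Subset.rfl)
    _ ≤ ψ * #(D \ A) + ψ * #(E \ F) := by
        gcongr
        · exact edgesBetween_le_mul_card fun x hx ↦ hD x (mem_sdiff.1 hx).1
        · exact edgesBetween_le_mul_card fun y hy ↦ hE y (mem_sdiff.1 hy).1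
    _ = ψ * (#(D \ A) + #(E \ F)) := (mul_add ..).symm

theorem IsRegularNbhd.card_container_add_card_container_le (h : IsRegularNbhd nb d) (hd : 0 < d)
    (hψ : 2 * ψ ≤ d) (hAF : A ⊆ nonNbrs nb F) (ht : #A + #F + t = Fintype.card α)
    (hTA : T ⊆ A) (hTF : T' ⊆ F) :
    d * (#(container nb ψ T T') + #(container nb ψ T' T)) ≤ d * Fintype.card α + 4 * ψ * t := by
  set D := container nb ψ T T'
  set E := container nb ψ T' T
  have hFA : F ⊆ nonNbrs nb A := (subset_nonNbrs_comm h.symm).1 hAF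
  have hDA : #(D \ A) ≤ 2 * t :=
    h.card_sdiff_le_two_mul hd hψ hAF ht hTA fun x hx ↦ (mem_container.1 hx).2
  have hEF : #(E \ F) ≤ 2 * t :=
    h.card_sdiff_le_two_mul hd hψ hFA (by omega) hTF fun x hx ↦ (mem_container.1 hx).2
  calc d * (#D + #E) ≤ d * Fintype.card α + edgesBetween nb D E := by
        have hcount := h.edgesBetween_compl_add D E
        omega
    _ ≤ d * Fintype.card α + ψ * (#(D \ A) + #(E \ F)) := by
        gcongr
        exact edgesBetween_le_of_subset_nonNbrs h.symm hAF
          (fun x hx ↦ card_nb_inter_container_le hx) fun y hy ↦ card_nb_inter_container_le hy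
    _ ≤ d * Fintype.card α + ψ * (2 * t + 2 * t) := by gcongr
    _ = d * Fintype.card α + 4 * ψ * t := by ring

end Containers

section PairCounts

variable {α : Type*} [Fintype α] [DecidableEq α] {nb : α → Finset α} {d j t : ℕ}
  {D E : Finset α}

/-- The pairs of sets without edges between them whose first component has defect `t`. -/
def nonAdjPairs (nb : α → Finset α) (t : ℕ) : Finset (Finset α × Finset α) :=
  {p | p.2 ⊆ nonNbrs nb p.1 ∧ defect nb p.1 = t}

theorem mem_nonAdjPairs {p : Finset α × Finset α} :
    p ∈ nonAdjPairs nb t ↔ p.2 ⊆ nonNbrs nb p.1 ∧ defect nb p.1 = t := by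
  simp [nonAdjPairs]

/-- The pairs of `nonAdjPairs nb t` whose maximal enlargement is contained in `(D, E)`. -/
def confinedPairs (nb : α → Finset α) (t : ℕ) (D E : Finset α) : Finset (Finset α × Finset α) :=
  {p ∈ nonAdjPairs nb t | nonNbrs nb (nonNbrs nb p.1) ⊆ D ∧ nonNbrs nb p.1 ⊆ E}

theorem mem_confinedPairs {p : Finset α × Finset α} :
    p ∈ confinedPairs nb t D E ↔ p ∈ nonAdjPairs nb t ∧
      nonNbrs nb (nonNbrs nb p.1) ⊆ D ∧ nonNbrs nb p.1 ⊆ E := by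
  simp [confinedPairs]

/-- Such a pair is determined by `p.1 ⊆ D` and by `p.2`, a subset of a set that is small compared
with `E`. -/
theorem card_confinedPairs_far_le (hs : ∀ x y, y ∈ nb x → x ∈ nb y)
    (hDE : #D + #E ≤ Fintype.card α + j) :
    #{p ∈ confinedPairs nb t D E | #(nonNbrs nb p.1) + 2 * j ≤ #E} ≤
      2 ^ (Fintype.card α - j) := by
  rcases lt_or_ge #E (2 * j) with hEj | hEj
  · rw [filter_false_of_mem fun p _ ↦ by omega, card_empty]
    exact Nat.zero_le _
  let firsts : Finset (Finset α) := {A ∈ D.powerset | #(nonNbrs nb A) + 2 * j ≤ #E}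
  have hcover : {p ∈ confinedPairs nb t D E | #(nonNbrs nb p.1) + 2 * j ≤ #E} ⊆
      firsts.biUnion fun A ↦ {A} ×ˢ (nonNbrs nb A).powerset := by
    intro p hp
    rw [mem_filter, mem_confinedPairs, mem_nonAdjPairs] at hp
    obtain ⟨⟨⟨hp₂, -⟩, hpD, -⟩, hpE⟩ := hp
    refine mem_biUnion.2 ⟨p.1, mem_filter.2 ⟨mem_powerset.2 ?_, hpE⟩, ?_⟩
    · exact (subset_nonNbrs_nonNbrs hs p.1).trans hpD
    · exact mem_product.2 ⟨mem_singleton_self _, mem_powerset.2 hp₂⟩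
  have hfibre : ∀ A ∈ firsts, #(({A} : Finset (Finset α)) ×ˢ (nonNbrs nb A).powerset) ≤
      2 ^ (#E - 2 * j) := by
    intro A hA
    rw [card_product, card_singleton, one_mul, card_powerset]
    exact Nat.pow_le_pow_right two_pos (by have := (mem_filter.1 hA).2; omega)
  calc _ ≤ #firsts * 2 ^ (#E - 2 * j) :=
        (card_le_card hcover).trans (card_biUnion_le_card_mul _ _ _ hfibre)
    _ ≤ 2 ^ #D * 2 ^ (#E - 2 * j) := by
        rw [← card_powerset D]
        gcongr
        exact filter_subset _ _
    _ ≤ 2 ^ (Fintype.card α - j) := by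
        rw [← pow_add]
        exact Nat.pow_le_pow_right two_pos (by omega)

/-- Here `F = nonNbrs nb p.1` is recovered from `E` by deleting fewer than `2 * j` elements, and
`p` is a pair of subsets of `nonNbrs nb F` and `F`. -/
theorem IsRegularNbhd.card_confinedPairs_near_le (h : IsRegularNbhd nb d) (hd : 0 < d) :
    #{p ∈ confinedPairs nb t D E | ¬ #(nonNbrs nb p.1) + 2 * j ≤ #E} ≤
      #(smallSets α (2 * j)) * 2 ^ (Fintype.card α - t) := by
  let deletions : Finset (Finset α) :=
    {R ∈ smallSets α (2 * j) | #(nonNbrs nb (E \ R)) + #(E \ R) + t = Fintype.card α}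
  have hcover : {p ∈ confinedPairs nb t D E | ¬ #(nonNbrs nb p.1) + 2 * j ≤ #E} ⊆
      deletions.biUnion fun R ↦ (nonNbrs nb (E \ R)).powerset ×ˢ (E \ R).powerset := by
    intro p hp
    rw [mem_filter, mem_confinedPairs, mem_nonAdjPairs] at hp
    obtain ⟨⟨⟨hp₂, ht⟩, -, hpE⟩, hnear⟩ := hp
    have hF : E \ (E \ nonNbrs nb p.1) = nonNbrs nb p.1 := Finset.sdiff_sdiff_eq_self hpE
    refine mem_biUnion.2 ⟨E \ nonNbrs nb p.1, mem_filter.2 ⟨mem_smallSets.2 ?_, ?_⟩, ?_⟩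
    · rw [card_sdiff_of_subset hpE]
      omega
    · rw [hF, ← ht]
      exact h.card_add_card_add_defect hd p.1
    · rw [hF, mem_product, mem_powerset, mem_powerset]
      exact ⟨subset_nonNbrs_nonNbrs h.symm p.1, hp₂⟩
  have hfibre : ∀ R ∈ deletions, #((nonNbrs nb (E \ R)).powerset ×ˢ (E \ R).powerset) ≤
      2 ^ (Fintype.card α - t) := by
    intro R hR
    rw [card_product, card_powerset, card_powerset, ← pow_add]
    exact Nat.pow_le_pow_right two_pos (by have := (mem_filter.1 hR).2; omega)
  calc _ ≤ #deletions * 2 ^ (Fintype.card α - t) :=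
        (card_le_card hcover).trans (card_biUnion_le_card_mul _ _ _ hfibre)
    _ ≤ #(smallSets α (2 * j)) * 2 ^ (Fintype.card α - t) := by
        gcongr
        exact filter_subset _ _

theorem IsRegularNbhd.card_confinedPairs_le (h : IsRegularNbhd nb d) (hd : 0 < d)
    (hDE : #D + #E ≤ Fintype.card α + j) :
    #(confinedPairs nb t D E) ≤ 2 ^ (Fintype.card α - j) +
      #(smallSets α (2 * j)) * 2 ^ (Fintype.card α - t) := by
  rw [← card_filter_add_card_filter_not fun p ↦ #(nonNbrs nb p.1) + 2 * j ≤ #E]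
  exact Nat.add_le_add (card_confinedPairs_far_le h.symm hDE) (h.card_confinedPairs_near_le hd)

theorem IsRegularNbhd.card_nonAdjPairs_le (h : IsRegularNbhd nb d) (hd : 0 < d) {ψ : ℕ}
    (hψ₀ : 0 < ψ) (hψ : 2 * ψ ≤ d) (hj : 4 * ψ * t ≤ d * j) :
    #(nonAdjPairs nb t) ≤ #(smallSets α (Fintype.card α / ψ)) ^ 2 *
      (2 ^ (Fintype.card α - j) + #(smallSets α (2 * j)) * 2 ^ (Fintype.card α - t)) := by
  let D (q : Finset α × Finset α) := container nb ψ q.1 q.2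
  let E (q : Finset α × Finset α) := container nb ψ q.2 q.1
  let small := smallSets α (Fintype.card α / ψ)
  let fingerprints : Finset (Finset α × Finset α) :=
    {q ∈ small ×ˢ small | #(D q) + #(E q) ≤ Fintype.card α + j}
  have hcover : nonAdjPairs nb t ⊆ fingerprints.biUnion fun q ↦ confinedPairs nb t (D q) (E q) := by
    intro p hp
    set F := nonNbrs nb p.1
    obtain ⟨T, hTA, hTcard, hT⟩ := exists_subset_card_sdiff_biUnion_lt nb (nonNbrs nb F) hψ₀
    obtain ⟨T', hTF, hTcard', hT'⟩ := exists_subset_card_sdiff_biUnion_lt nb F hψ₀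
    have hsize : #(D (T, T')) + #(E (T, T')) ≤ Fintype.card α + j := by
      have ht := h.card_add_card_add_defect hd p.1
      rw [(mem_nonAdjPairs.1 hp).2] at ht
      have hcard := h.card_container_add_card_container_le hd hψ Subset.rfl ht hTA hTF
      refine Nat.le_of_mul_le_mul_left ?_ hd
      rw [mul_add d (Fintype.card α)]
      exact hcard.trans (by gcongr)
    refine mem_biUnion.2 ⟨(T, T'), mem_filter.2 ⟨mem_product.2 ⟨?_, ?_⟩, hsize⟩,
      mem_confinedPairs.2 ⟨hp, ?_, ?_⟩⟩
    · exact mem_smallSets.2 ((Nat.le_div_iff_mul_le hψ₀).2 (mul_comm ψ _ ▸ hTcard))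
    · exact mem_smallSets.2 ((Nat.le_div_iff_mul_le hψ₀).2 (mul_comm ψ _ ▸ hTcard'))
    · exact subset_container h.symm Subset.rfl hTF hT
    · exact subset_container h.symm (subset_nonNbrs_nonNbrs h.symm F) hTA hT'
  calc #(nonAdjPairs nb t) ≤ #fingerprints * _ :=
        (card_le_card hcover).trans <| card_biUnion_le_card_mul _ _ _ fun q hq ↦
          h.card_confinedPairs_le hd (mem_filter.1 hq).2
    _ ≤ #small ^ 2 * _ := by
        rw [sq, ← card_product]
        gcongr
        exact filter_subset _ _

/-- The pairs of `σ`-matching-free sets without edges between them: the independent sets of the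
bipartite double cover of `nb` with the matching `σ` added on either side. -/
def matchingFreePairs (nb : α → Finset α) (σ : α → α) : Finset (Finset α × Finset α) :=
  {p | p.2 ⊆ nonNbrs nb p.1 ∧ p.1 ∈ matchingFreeSets σ ∧ p.2 ∈ matchingFreeSets σ}

theorem mem_matchingFreePairs {σ : α → α} {p : Finset α × Finset α} :
    p ∈ matchingFreePairs nb σ ↔
      p.2 ⊆ nonNbrs nb p.1 ∧ p.1 ∈ matchingFreeSets σ ∧ p.2 ∈ matchingFreeSets σ := by
  simp [matchingFreePairs]

theorem card_matchingFreePairs_le (hs : ∀ x y, y ∈ nb x → x ∈ nb y) (σ : α → α) {k t₀ : ℕ}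
    (hiso : ∀ A, k < #(nonNbrs nb (nonNbrs nb A)) → k < #(nonNbrs nb A) → t₀ ≤ defect nb A) :
    #(matchingFreePairs nb σ) ≤ 2 * (#(smallSets α k) * #(matchingFreeSets σ)) +
      ∑ t ∈ Icc t₀ (Fintype.card α), #(nonAdjPairs nb t) := by
  let small := smallSets α k
  let free := matchingFreeSets σ
  have hcover : matchingFreePairs nb σ ⊆
      (small ×ˢ free ∪ free ×ˢ small) ∪ (Icc t₀ (Fintype.card α)).biUnion (nonAdjPairs nb) := by
    intro p hp
    obtain ⟨hp₂, hfree₁, hfree₂⟩ := mem_matchingFreePairs.1 hp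
    rw [mem_union, mem_union, mem_product, mem_product, mem_biUnion]
    rcases le_or_gt #(nonNbrs nb (nonNbrs nb p.1)) k with hA | hA
    · exact .inl <| .inl
        ⟨mem_smallSets.2 ((card_le_card (subset_nonNbrs_nonNbrs hs p.1)).trans hA), hfree₂⟩
    rcases le_or_gt #(nonNbrs nb p.1) k with hF | hF
    · exact .inl <| .inr ⟨hfree₁, mem_smallSets.2 ((card_le_card hp₂).trans hF)⟩
    · exact .inr ⟨defect nb p.1, mem_Icc.2 ⟨hiso p.1 hA hF, Nat.sub_le _ _⟩,
        mem_nonAdjPairs.2 ⟨hp₂, rfl⟩⟩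
  refine (card_le_card hcover).trans <| (card_union_le _ _).trans <|
    Nat.add_le_add ((card_union_le _ _).trans_eq ?_) card_biUnion_le
  rw [card_product, card_product]
  ring

end PairCounts

section EdgeIsoperimetry

variable {m : ℕ}

theorem card_V (m : ℕ) : Fintype.card (V m) = 2 ^ m := by simp [ZMod.card]

theorem sum_univ_cons (f : V (m + 1) → ℝ) :
    ∑ x, f x = ∑ u : V m, f (Fin.cons 0 u) + ∑ u : V m, f (Fin.cons 1 u) := by
  rw [← (Fin.consEquiv fun _ : Fin (m + 1) ↦ ZMod 2).sum_comp, Fintype.sum_prod_type]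
  exact Fin.sum_univ_two fun c : Fin 2 ↦ ∑ u : V m, f (Fin.cons (c : ZMod 2) u)

theorem cons_add_single_zero (c : ZMod 2) (u : V m) :
    (Fin.cons c u : V (m + 1)) + Pi.single 0 1 = Fin.cons (c + 1) u := by
  ext i
  refine Fin.cases ?_ (fun i ↦ ?_) i <;> simp

theorem cons_add_single_succ (c : ZMod 2) (u : V m) (i : Fin m) :
    (Fin.cons c u : V (m + 1)) + Pi.single i.succ 1 = Fin.cons c (u + Pi.single i 1) := by
  ext k
  refine Fin.cases ?_ (fun k ↦ ?_) k
  · simp [(Fin.succ_ne_zero i).symm]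
  · simp [Pi.single_apply]

/-- Talagrand's function `h_S`: the number of hypercube edges leaving `S` at `x`, which is `0` for
`x ∉ S`. -/
def boundaryDeg (S : Finset (V m)) (x : V m) : ℕ :=
  #{i : Fin m | x ∈ S ∧ x + Pi.single i 1 ∉ S}

theorem boundaryDeg_le (S : Finset (V m)) (x : V m) : boundaryDeg S x ≤ m :=
  (card_filter_le _ _).trans_eq (card_fin m)

/-- The section of `S` over the value `c` of the first coordinate. -/
def headSlice (S : Finset (V (m + 1))) (c : ZMod 2) : Finset (V m) := {u | Fin.cons c u ∈ S}

theorem mem_headSlice {S : Finset (V (m + 1))} {c : ZMod 2} {u : V m} :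
    u ∈ headSlice S c ↔ Fin.cons c u ∈ S := by
  simp [headSlice]

theorem card_headSlice_add_card_headSlice (S : Finset (V (m + 1))) :
    #(headSlice S 0) + #(headSlice S 1) = #S := by
  have hsum := sum_univ_cons fun x ↦ if x ∈ S then 1 else 0
  simp only [← mem_headSlice, sum_boole, filter_univ_mem] at hsum
  exact_mod_cast hsum.symm

theorem card_headSlice_le (S : Finset (V (m + 1))) (c : ZMod 2) : #(headSlice S c) ≤ 2 ^ m :=
  card_V m ▸ card_le_univ _

theorem boundaryDeg_cons (S : Finset (V (m + 1))) (c : ZMod 2) (u : V m) :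
    boundaryDeg S (Fin.cons c u) =
      boundaryDeg (headSlice S c) u + if u ∈ headSlice S c \ headSlice S (c + 1) then 1 else 0 := by
  simp only [boundaryDeg, Fin.card_filter_univ_succ, cons_add_single_zero, cons_add_single_succ,
    mem_sdiff, mem_headSlice]
  split_ifs <;> simp only [add_zero]

theorem sqrt_sq_sum_add_sq_sum_le {ι : Type*} (s : Finset ι) (a b : ι → ℝ) :
    √((∑ i ∈ s, a i) ^ 2 + (∑ i ∈ s, b i) ^ 2) ≤ ∑ i ∈ s, √(a i ^ 2 + b i ^ 2) := by
  simpa [Complex.norm_eq_sqrt_sq_add_sq] using norm_sum_le s fun i ↦ (⟨a i, b i⟩ : ℂ)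

theorem sqrt_sq_add_sq_le_sum_sqrt_boundaryDeg (S : Finset (V (m + 1))) (c : ZMod 2) {X Y : ℝ}
    (hX₀ : 0 ≤ X) (hX : X ≤ ∑ u, √(boundaryDeg (headSlice S c) u)) (hY₀ : 0 ≤ Y)
    (hY : Y ≤ #(headSlice S c) - #(headSlice S (c + 1))) :
    √(X ^ 2 + Y ^ 2) ≤ ∑ u, √(boundaryDeg S (Fin.cons c u)) := by
  let leaves (u : V m) : ℝ := if u ∈ headSlice S c \ headSlice S (c + 1) then 1 else 0
  have hleaves : Y ≤ ∑ u, leaves u := by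
    have hcard : (#(headSlice S c) : ℝ) ≤
        #(headSlice S c \ headSlice S (c + 1)) + #(headSlice S (c + 1)) := by
      exact_mod_cast tsub_le_iff_right.1 (le_card_sdiff (headSlice S (c + 1)) (headSlice S c))
    simp only [leaves, sum_boole, filter_univ_mem]
    linarith
  calc √(X ^ 2 + Y ^ 2)
      ≤ √((∑ u, √(boundaryDeg (headSlice S c) u)) ^ 2 + (∑ u, leaves u) ^ 2) := by
        gcongr
    _ ≤ ∑ u, √(√(boundaryDeg (headSlice S c) u) ^ 2 + leaves u ^ 2) :=
        sqrt_sq_sum_add_sq_sum_le _ _ _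
    _ = ∑ u, √(boundaryDeg S (Fin.cons c u)) := by
        refine sum_congr rfl fun u _ ↦ ?_
        rw [Real.sq_sqrt (Nat.cast_nonneg _), boundaryDeg_cons]
        simp only [leaves]
        split_ifs <;> simp

/-- The function `a (1 - a / M)`, a lower bound for the boundary of a set of `a` vertices in a
hypercube with `M` vertices. -/
noncomputable def profile (M a : ℝ) : ℝ := a * (M - a) / M

theorem profile_nonneg {M a : ℝ} (ha₀ : 0 ≤ a) (ha : a ≤ M) : 0 ≤ profile M a :=
  div_nonneg (mul_nonneg ha₀ (sub_nonneg.2 ha)) (ha₀.trans ha)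

theorem profile_le_quarter {M : ℝ} (hM : 0 < M) (a : ℝ) : profile M a ≤ M / 4 := by
  rw [profile, div_le_iff₀ hM]
  nlinarith [sq_nonneg (M - 2 * a)]

theorem half_le_profile {M a k : ℝ} (hM : 0 < M) (hk : 0 ≤ k) (hka : k ≤ a) (hak : a + k ≤ M) :
    k / 2 ≤ profile M a := by
  rw [profile, le_div_iff₀ hM]
  rcases le_total (2 * a) M with _ | _ <;> nlinarith

theorem profile_sub_self (M a : ℝ) : profile M (M - a) = profile M a := by
  simp only [profile, sub_sub_cancel, mul_comm]

/-- Since `profile (2 * M) (a + b)` exceeds the sum of the two profiles by `(a - b) ^ 2 / (2 * M)`,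
only the square root has to be bounded below. -/
theorem profile_add_le_sqrt {M a b : ℝ} (hM : 0 < M) (ha : a ≤ M) (hb : 0 ≤ b) (hab : b ≤ a) :
    profile (2 * M) (a + b) ≤ √(profile M a ^ 2 + (a - b) ^ 2) + profile M b := by
  have hsqrt : profile M a + (a - b) ^ 2 / (2 * M) ≤ √(profile M a ^ 2 + (a - b) ^ 2) := by
    apply Real.le_sqrt_of_sq_le
    have hprofile : profile M a / M ≤ 1 / 4 := by
      rw [div_le_iff₀ hM]
      linarith [profile_le_quarter hM a]
    have hdiff : (a - b) ^ 2 / (4 * M ^ 2) ≤ 1 / 4 := by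
      rw [div_le_iff₀ (by positivity)]
      nlinarith
    calc (profile M a + (a - b) ^ 2 / (2 * M)) ^ 2
        = profile M a ^ 2 + (a - b) ^ 2 * (profile M a / M + (a - b) ^ 2 / (4 * M ^ 2)) := by
          field_simp
          ring
      _ ≤ profile M a ^ 2 + (a - b) ^ 2 * 1 := by
          gcongr
          linarith
      _ = profile M a ^ 2 + (a - b) ^ 2 := by rw [mul_one]
  have hsum : profile (2 * M) (a + b) =
      profile M a + (a - b) ^ 2 / (2 * M) + profile M b := by
    simp only [profile]
    field_simp
    ring
  linarith

theorem profile_card_headSlice_add_le (S : Finset (V (m + 1)))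
    (ih : ∀ S : Finset (V m), profile (2 ^ m) #S ≤ ∑ x, √(boundaryDeg S x)) (c : ZMod 2)
    (hc : #(headSlice S (c + 1)) ≤ #(headSlice S c)) :
    profile (2 * 2 ^ m) (#(headSlice S c) + #(headSlice S (c + 1))) ≤
      ∑ u, √(boundaryDeg S (Fin.cons c u)) + ∑ u, √(boundaryDeg S (Fin.cons (c + 1) u)) := by
  have hle (c : ZMod 2) : (#(headSlice S c) : ℝ) ≤ 2 ^ m := by exact_mod_cast card_headSlice_le S c
  have hc' : (#(headSlice S (c + 1)) : ℝ) ≤ #(headSlice S c) := by exact_mod_cast hc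
  refine (profile_add_le_sqrt (by positivity) (hle c) (Nat.cast_nonneg _) hc').trans
    (add_le_add ?_ ?_)
  · exact sqrt_sq_add_sq_le_sum_sqrt_boundaryDeg S c
      (profile_nonneg (Nat.cast_nonneg _) (hle c)) (ih _) (sub_nonneg.2 hc') le_rfl
  · refine (ih _).trans (sum_le_sum fun u _ ↦ Real.sqrt_le_sqrt ?_)
    rw [boundaryDeg_cons]
    exact_mod_cast Nat.le_add_right _ _

theorem profile_card_le_sum_sqrt_boundaryDeg (S : Finset (V m)) :
    profile (2 ^ m) #S ≤ ∑ x, √(boundaryDeg S x) := by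
  induction m with
  | zero =>
    have hS : #S ≤ 1 := (card_le_univ S).trans_eq (card_V 0)
    refine le_trans ?_ (sum_nonneg fun _ _ ↦ Real.sqrt_nonneg _)
    interval_cases #S <;> simp [profile]
  | succ m ih =>
    rw [sum_univ_cons, ← card_headSlice_add_card_headSlice, pow_succ', Nat.cast_add]
    rcases le_total #(headSlice S 1) #(headSlice S 0) with h | h
    · exact profile_card_headSlice_add_le S ih 0 h
    · rw [add_comm (#(headSlice S 0) : ℝ), add_comm (∑ u, √(boundaryDeg S (Fin.cons 0 u)))]
      exact profile_card_headSlice_add_le S ih 1 h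

end EdgeIsoperimetry

section VertexIsoperimetry

variable {m : ℕ}

/-- The closed neighbourhood of `x` in the hypercube. -/
def closedNbhd (x : V m) : Finset (V m) := insert x (univ.image fun i ↦ x + Pi.single i 1)

theorem mem_closedNbhd {x y : V m} :
    y ∈ closedNbhd x ↔ y = x ∨ ∃ i, x + Pi.single i 1 = y := by
  simp [closedNbhd]

theorem isRegularNbhd_closedNbhd : IsRegularNbhd (closedNbhd (m := m)) (m + 1) where
  symm x y hy := by
    rw [mem_closedNbhd] at hy ⊢
    refine hy.imp Eq.symm fun ⟨i, hi⟩ ↦ ⟨i, ?_⟩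
    rw [← hi, add_assoc, ZModModule.add_self, add_zero]
  card_eq x := by
    have hinj : Function.Injective fun i : Fin m ↦ x + Pi.single i 1 := fun i j hij ↦ by
      by_contra hne
      simpa [Pi.single_apply, hne] using congrFun (add_left_cancel hij) i
    rw [closedNbhd, card_insert_of_notMem (by simp), card_image_of_injective _ hinj, card_fin]

theorem boundaryDeg_compl_eq_zero {A : Finset (V m)} {x : V m}
    (hx : x ∈ A ∪ nonNbrs closedNbhd A) : boundaryDeg Aᶜ x = 0 := by
  refine card_eq_zero.2 (filter_eq_empty_iff.2 fun i _ ↦ ?_)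
  rw [mem_compl, mem_compl, not_not]
  rintro ⟨hxA, hxi⟩
  have hdisj := mem_nonNbrs.1 ((mem_union.1 hx).resolve_left hxA)
  exact disjoint_left.1 hdisj (mem_closedNbhd.2 (.inr ⟨i, rfl⟩)) hxi

theorem profile_card_le_card_compl_mul_sqrt (A : Finset (V m)) :
    profile (2 ^ m) #A ≤ #(A ∪ nonNbrs closedNbhd A)ᶜ * √m := by
  have hA : (#Aᶜ : ℝ) = 2 ^ m - #A := by
    rw [card_compl, Nat.cast_sub (card_le_univ A), card_V, Nat.cast_pow, Nat.cast_ofNat]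
  calc profile (2 ^ m) #A = profile (2 ^ m) #Aᶜ := by rw [hA, profile_sub_self]
    _ ≤ ∑ x, √(boundaryDeg Aᶜ x) := profile_card_le_sum_sqrt_boundaryDeg _
    _ = ∑ x ∈ (A ∪ nonNbrs closedNbhd A)ᶜ, √(boundaryDeg Aᶜ x) := by
        refine (sum_subset (subset_univ _) fun x _ hx ↦ ?_).symm
        rw [boundaryDeg_compl_eq_zero (notMem_compl.1 hx), Nat.cast_zero, Real.sqrt_zero]
    _ ≤ #(A ∪ nonNbrs closedNbhd A)ᶜ • √m :=
        sum_le_card_nsmul _ _ _ fun x _ ↦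
          Real.sqrt_le_sqrt (by exact_mod_cast boundaryDeg_le Aᶜ x)
    _ = #(A ∪ nonNbrs closedNbhd A)ᶜ * √m := nsmul_eq_mul _ _

theorem half_le_defect_closedNbhd_mul_sqrt (A : Finset (V m)) {k : ℝ} (hk : 0 ≤ k)
    (hA : k ≤ #(nonNbrs closedNbhd (nonNbrs closedNbhd A))) (hF : k ≤ #(nonNbrs closedNbhd A)) :
    k / 2 ≤ defect closedNbhd A * √m := by
  have hreg := isRegularNbhd_closedNbhd (m := m)
  have htotal := hreg.card_add_card_add_defect m.succ_pos A
  set F := nonNbrs closedNbhd A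
  have hdisj : Disjoint (nonNbrs closedNbhd F) F := disjoint_left.2 fun x hx ↦
    disjoint_left.1 (mem_nonNbrs.1 hx) (mem_closedNbhd.2 (.inl rfl))
  have hcompl : #(nonNbrs closedNbhd F ∪ F)ᶜ = defect closedNbhd A := by
    rw [card_compl, card_union_of_disjoint hdisj]
    omega
  have hroom : #(nonNbrs closedNbhd F) + k ≤ (2 : ℝ) ^ m := by
    have : (#(nonNbrs closedNbhd F) + #F : ℝ) ≤ 2 ^ m := by
      exact_mod_cast card_V m ▸ (Nat.le_add_right _ _).trans_eq htotal
    linarith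
  have hiso := profile_card_le_card_compl_mul_sqrt (nonNbrs closedNbhd F)
  rw [nonNbrs_nonNbrs_nonNbrs hreg.symm, hcompl] at hiso
  exact (half_le_profile (by positivity) hk hA hroom).trans hiso

end VertexIsoperimetry

section Folding

variable {m n : ℕ}

/-- The sum of the coordinates, i.e. the Hamming weight modulo `2`. -/
def parity (u : V m) : ZMod 2 := ∑ i, u i

theorem parity_eq_hammingNorm (u : V m) : parity u = hammingNorm u := by
  rw [parity, hammingNorm, card_filter, Nat.cast_sum]
  refine sum_congr rfl fun i _ ↦ ?_
  generalize u i = a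
  revert a
  decide

/-- The unique vector with parity `c` whose coordinates from the second on are those of `u`. The
maps `evenOddLift 0` and `evenOddLift 1` identify `F₂ᵐ` with the even and with the odd vectors of
`F₂ᵐ⁺¹`. -/
def evenOddLift (c : ZMod 2) (u : V m) : V (m + 1) := Fin.cons (parity u + c) u

theorem evenOddLift_add (c c' : ZMod 2) (u w : V m) :
    evenOddLift c u + evenOddLift c' w = evenOddLift (c + c') (u + w) := by
  have hparity : parity (u + w) = parity u + parity w := sum_add_distrib
  ext i
  refine Fin.cases ?_ (fun i ↦ ?_) i
  · simp only [evenOddLift, Pi.add_apply, Fin.cons_zero, hparity]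
    ring
  · simp only [evenOddLift, Pi.add_apply, Fin.cons_succ]

theorem evenOddLift_parity_tail (x : V (m + 1)) : evenOddLift (parity x) (Fin.tail x) = x := by
  have hhead : parity (Fin.tail x) + parity x = x 0 := by
    have htail : parity x = x 0 + parity (Fin.tail x) := Fin.sum_univ_succ x
    rw [htail, add_left_comm, CharTwo.add_self_eq_zero, add_zero]
  rw [evenOddLift, hhead, Fin.cons_self_tail]

theorem exists_single_add_evenOddLift_zero {u w : V m} (h : w ∈ closedNbhd u) :
    ∃ j, evenOddLift 1 w = evenOddLift 0 u + Pi.single j 1 := by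
  rcases mem_closedNbhd.1 h with rfl | ⟨i, rfl⟩
  · exact ⟨0, by rw [evenOddLift, evenOddLift, cons_add_single_zero, add_zero]⟩
  · have hparity : parity (u + Pi.single i 1) = parity u + 1 := by
      simp [parity, sum_add_distrib]
    refine ⟨i.succ, ?_⟩
    rw [evenOddLift, evenOddLift, cons_add_single_succ, hparity, add_assoc,
      CharTwo.add_self_eq_zero]

theorem qCay_adj_add_single (v x : V n) (i : Fin n) : (QCay n v).Adj x (x + Pi.single i 1) := by
  have hdist : hammingDist x (x + Pi.single i 1) = 1 := by
    rw [hammingDist, card_eq_one]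
    refine ⟨i, ext fun j ↦ ?_⟩
    rw [mem_filter_univ, mem_singleton]
    rcases eq_or_ne j i with rfl | hj <;> simp [*]
  exact ⟨by simp, .inl (.inl hdist)⟩

theorem qCay_adj_add_self {v : V n} (hv : v ≠ 0) (x : V n) : (QCay n v).Adj x (x + v) :=
  ⟨by simpa using hv, .inl (.inr (by rw [← add_assoc, ZModModule.add_self, zero_add]))⟩

/-- The elements of `I` of parity `c`, read in `F₂ᵐ`. -/
def parityPart (I : Finset (V (m + 1))) (c : ZMod 2) : Finset (V m) := {u | evenOddLift c u ∈ I}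

theorem mem_parityPart {I : Finset (V (m + 1))} {c : ZMod 2} {u : V m} :
    u ∈ parityPart I c ↔ evenOddLift c u ∈ I := by
  simp [parityPart]

theorem parityPart_injective :
    Function.Injective fun I : Finset (V (m + 1)) ↦ (parityPart I 0, parityPart I 1) := by
  intro I J hIJ
  have hparts : ∀ c, parityPart I c = parityPart J c := by
    simp only [Prod.mk.injEq] at hIJ
    exact Fin.forall_fin_two.2 hIJ
  ext x
  rw [← evenOddLift_parity_tail x, ← mem_parityPart, hparts, mem_parityPart]

theorem parityPart_mem_matchingFreePairs {z : V m} {I : Finset (V (m + 1))}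
    (hz : evenOddLift 0 z ≠ 0) (hI : ∀ x ∈ I, ∀ y ∈ I, ¬ (QCay (m + 1) (evenOddLift 0 z)).Adj x y) :
    (parityPart I 0, parityPart I 1) ∈ matchingFreePairs closedNbhd (· + z) := by
  have hfree (c : ZMod 2) : parityPart I c ∈ matchingFreeSets (· + z) := by
    refine mem_matchingFreeSets.2 fun u hu huz ↦ ?_
    rw [mem_parityPart] at hu huz
    have hshift : evenOddLift c (u + z) = evenOddLift c u + evenOddLift 0 z := by
      rw [evenOddLift_add, add_zero]
    exact hI _ hu _ huz (hshift ▸ qCay_adj_add_self hz _)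
  refine mem_matchingFreePairs.2 ⟨fun w hw ↦ ?_, hfree 0, hfree 1⟩
  refine mem_nonNbrs.2 (disjoint_left.2 fun u huw hu ↦ ?_)
  rw [mem_parityPart] at hw hu
  obtain ⟨j, hj⟩ := exists_single_add_evenOddLift_zero (isRegularNbhd_closedNbhd.symm w u huw)
  exact hI _ hu _ hw (hj ▸ qCay_adj_add_single _ _ j)

theorem exists_ncard_le_card_matchingFreePairs {v : V (m + 1)} (hv : v ≠ 0)
    (he : Even (hammingNorm v)) :
    ∃ z : V m, z ≠ 0 ∧
      {I : Finset (V (m + 1)) | ∀ x ∈ I, ∀ y ∈ I, ¬ (QCay (m + 1) v).Adj x y}.ncard ≤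
        #(matchingFreePairs closedNbhd (· + z)) := by
  have hlift : evenOddLift 0 (Fin.tail v) = v := by
    simpa only [parity_eq_hammingNorm, ZMod.natCast_eq_zero_iff_even.2 he] using
      evenOddLift_parity_tail v
  refine ⟨Fin.tail v, fun htail ↦ hv ?_, ?_⟩
  · rw [← hlift, htail, ← ZModModule.add_self (evenOddLift 0 0), evenOddLift_add, add_zero,
      add_zero]
  · rw [← Set.ncard_coe_finset]
    refine Set.ncard_le_ncard_of_injOn _ (fun I hI ↦ ?_) parityPart_injective.injOn
    rw [← hlift] at hv hI
    exact parityPart_mem_matchingFreePairs hv hI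

end Folding

section ExponentialBounds

variable {α : Type*} [Fintype α] {d t : ℕ} {s : ℝ}

theorem two_pow_sub_le_mul_exp {N j : ℕ} (h : j ≤ N) :
    (2 : ℝ) ^ (N - j) ≤ 2 ^ N * Real.exp (-(j / 2)) := by
  have hexp : Real.exp (j / 2) ≤ 2 ^ j := by
    rw [← Real.rpow_natCast, Real.rpow_def_of_pos two_pos, Real.exp_le_exp]
    nlinarith [Real.log_two_gt_d9, j.cast_nonneg (α := ℝ)]
  rw [pow_sub₀ _ two_ne_zero h, Real.exp_neg]
  gcongr

theorem div_le_div_div_ten {N d t s : ℝ} (hs : 1000 ≤ s) (hd : 0 < d) (ht : 0 ≤ t)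
    (hN : s ^ 3 * N ≤ 200 * d * t) : N / d ≤ t / s / 10 := by
  have hsq : 2000 ≤ s ^ 2 := by nlinarith
  rw [div_le_iff₀ hd, ← mul_le_mul_iff_right₀ (show 0 < s ^ 3 by positivity)]
  calc s ^ 3 * N ≤ 2000 * (d * t / 10) := by linarith
    _ ≤ s ^ 2 * (d * t / 10) := by gcongr
    _ = s ^ 3 * (t / s / 10 * d) := by field_simp

theorem card_smallSets_fingerprints_le_exp (hs : 1000 ≤ s) (hd : 1 ≤ d)
    (hlog : 1000 * Real.log d ≤ s) (hN : s ^ 3 * Fintype.card α ≤ 200 * d * t) {ψ : ℕ}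
    (hψ : d / s / 2 < ψ) : (#(smallSets α (Fintype.card α / ψ)) : ℝ) ≤ Real.exp (t / s) := by
  have hd₁ : (1 : ℝ) ≤ d := by exact_mod_cast hd
  have hψ₀ : (0 : ℝ) < ψ := hψ.trans' (by positivity)
  have hquot : ((Fintype.card α / ψ : ℕ) : ℝ) ≤ 400 * t / s ^ 2 := by
    refine Nat.cast_div_le.trans ?_
    rw [div_le_div_iff₀ hψ₀ (by positivity), ← mul_le_mul_iff_right₀ (show 0 < s by positivity)]
    calc s * (Fintype.card α * s ^ 2) = s ^ 3 * (Fintype.card α : ℝ) := by ring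
      _ ≤ 200 * (d : ℝ) * t := hN
      _ = s * (400 * t * (d / s / 2)) := by field_simp; ring
      _ ≤ s * (400 * t * ψ) := by gcongr
  refine (card_smallSets_le_exp hd₁ _).trans (Real.exp_le_exp.2 ?_)
  calc ((Fintype.card α / ψ : ℕ) : ℝ) * Real.log d + Fintype.card α / d
      ≤ 400 * t / s ^ 2 * (s / 1000) + t / s / 10 := by
        refine add_le_add ?_ (div_le_div_div_ten hs (by positivity) t.cast_nonneg hN)
        gcongr
        linarith
    _ = t / s / 2 := by field_simp; ring
    _ ≤ t / s := half_le_self (by positivity)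

theorem card_smallSets_two_mul_le_exp (hs : 1000 ≤ s) (hd : 1 ≤ d)
    (hlog : 1000 * Real.log d ≤ s) (hN : s ^ 3 * Fintype.card α ≤ 200 * d * t) {j : ℕ}
    (hj : j ≤ 9 * (t / s)) : (#(smallSets α (2 * j)) : ℝ) ≤ Real.exp (t / 50) := by
  have hd₁ : (1 : ℝ) ≤ d := by exact_mod_cast hd
  refine (card_smallSets_le_exp hd₁ _).trans (Real.exp_le_exp.2 ?_)
  calc ((2 * j : ℕ) : ℝ) * Real.log d + Fintype.card α / d
      ≤ 2 * (9 * (t / s)) * (s / 1000) + t / s / 10 := by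
        refine add_le_add ?_ (div_le_div_div_ten hs (by positivity) t.cast_nonneg hN)
        push_cast
        gcongr
        linarith
    _ ≤ 2 * (9 * (t / s)) * (s / 1000) + t / 1000 / 10 := by gcongr
    _ = t * (9 / 500 + 1 / 10000) := by field_simp; ring
    _ ≤ t / 50 := by linarith [t.cast_nonneg (α := ℝ)]

theorem le_of_pow_three_mul_le {N d t s : ℝ} (hs : 1000 ≤ s) (hd : 0 ≤ d) (hst : s ≤ t)
    (htN : t ≤ N) (hN : s ^ 3 * N ≤ 200 * d * t) : s ≤ d := by
  have hcube : s ^ 3 ≤ 200 * d := by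
    refine le_of_mul_le_mul_right (hN.trans ?_) (show 0 < N by linarith)
    gcongr
  have hsq : 200 * s ≤ s ^ 3 := by
    rw [pow_succ]
    gcongr
    nlinarith
  linarith

variable [DecidableEq α] {nb : α → Finset α}

/-- With codegree threshold `ψ ≈ d / s`, the containers of a pair of defect `t` exceed the vertex
set by `j ≈ 8 * t / s`. -/
theorem IsRegularNbhd.card_nonAdjPairs_le_exp (h : IsRegularNbhd nb d) (hs : 1000 ≤ s)
    (hd : 1 ≤ d) (hlog : 1000 * Real.log d ≤ s) (htN : t ≤ Fintype.card α) (hst : s ≤ t)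
    (hN : s ^ 3 * Fintype.card α ≤ 200 * d * t) :
    (#(nonAdjPairs nb t) : ℝ) ≤ 2 * (2 ^ Fintype.card α * Real.exp (-(t / s))) := by
  set N := Fintype.card α
  set a := t / s
  set ψ := ⌊d / s⌋₊
  set j := ⌈8 * a⌉₊
  have hs₀ : 0 < s := by linarith
  have ha : 1 ≤ a := (one_le_div hs₀).2 hst
  have hat : a ≤ t / 1000 := by simp only [a]; gcongr
  have hsd : 1 ≤ d / s := (one_le_div hs₀).2 <|
    le_of_pow_three_mul_le hs d.cast_nonneg hst (by exact_mod_cast htN) hN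
  have hψ : ψ * s ≤ d := (le_div_iff₀ hs₀).1 (Nat.floor_le (by positivity))
  have hj : 8 * a ≤ j := Nat.le_ceil _
  have hj' : j ≤ 9 * a := by linarith [Nat.ceil_lt_add_one (show 0 ≤ 8 * a by positivity)]
  have hjN : j ≤ N := htN.trans' (by exact_mod_cast (show (j : ℝ) ≤ t by linarith))
  have hthreshold : 2 * ψ ≤ d := by exact_mod_cast (show (2 * ψ : ℝ) ≤ d by nlinarith)
  have hexcess : (4 * ψ * t : ℝ) ≤ d * j := by
    calc (4 * ψ * t : ℝ) = ψ * s * (4 * a) := by simp only [a]; field_simp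
      _ ≤ d * j := by gcongr; linarith
  calc (#(nonAdjPairs nb t) : ℝ)
      ≤ #(smallSets α (N / ψ)) ^ 2 * (2 ^ (N - j) + #(smallSets α (2 * j)) * 2 ^ (N - t)) := by
        exact_mod_cast h.card_nonAdjPairs_le hd (Nat.floor_pos.2 hsd) hthreshold
          (by exact_mod_cast hexcess)
    _ ≤ Real.exp a ^ 2 * (2 ^ N * Real.exp (-(j / 2)) +
          Real.exp (t / 50) * (2 ^ N * Real.exp (-(t / 2)))) := by
        gcongr
        · exact card_smallSets_fingerprints_le_exp hs hd hlog hN (Nat.div_two_lt_floor hsd)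
        · exact two_pow_sub_le_mul_exp hjN
        · exact card_smallSets_two_mul_le_exp hs hd hlog hN hj'
        · exact two_pow_sub_le_mul_exp htN
    _ = 2 ^ N * (Real.exp (2 * a - j / 2) + Real.exp (2 * a + t / 50 - t / 2)) := by
        simp only [sub_eq_add_neg, Real.exp_add, two_mul a]
        ring
    _ ≤ 2 ^ N * (Real.exp (-a) + Real.exp (-a)) := by
        gcongr <;> linarith
    _ = 2 * (2 ^ N * Real.exp (-a)) := by ring

theorem card_matchingFreeSets_le_exp {σ : α → α} (hσ : Function.Involutive σ)
    (hfix : ∀ u, σ u ≠ u) :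
    (#(matchingFreeSets σ) : ℝ) ≤ Real.exp (Fintype.card α * (4 / 5 * Real.log 2)) := by
  have hlog : 5 * Real.log 3 ≤ 8 * Real.log 2 := by
    have := Real.log_le_log (by norm_num) (show (3 : ℝ) ^ 5 ≤ 2 ^ 8 by norm_num)
    simpa only [Real.log_pow, Nat.cast_ofNat] using this
  refine le_of_sq_le_sq ?_ (Real.exp_pos _).le
  calc (#(matchingFreeSets σ) : ℝ) ^ 2 ≤ 3 ^ Fintype.card α := by
        exact_mod_cast card_matchingFreeSets_sq_le hσ hfix
    _ = Real.exp (Fintype.card α * Real.log 3) := by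
        rw [Real.exp_nat_mul, Real.exp_log three_pos]
    _ ≤ Real.exp (2 * (Fintype.card α * (4 / 5 * Real.log 2))) := by
        rw [mul_left_comm (2 : ℝ)]
        gcongr
        linarith
    _ = Real.exp (Fintype.card α * (4 / 5 * Real.log 2)) ^ 2 := by
        rw [← Real.exp_nat_mul, Nat.cast_ofNat]

theorem card_smallSets_mul_card_matchingFreeSets_le_exp {σ : α → α} (hσ : Function.Involutive σ)
    (hfix : ∀ u, σ u ≠ u) {k : ℕ} (hk : 100 * k ≤ Fintype.card α) :
    (#(smallSets α k) * #(matchingFreeSets σ) : ℝ) ≤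
      2 ^ Fintype.card α * Real.exp (-(Fintype.card α / 100)) := by
  set N := Fintype.card α
  have hlog : Real.log 20 ≤ 5 * Real.log 2 := by
    have := Real.log_le_log (by norm_num) (show (20 : ℝ) ≤ 2 ^ 5 by norm_num)
    simpa only [Real.log_pow, Nat.cast_ofNat] using this
  have hkN : (k : ℝ) ≤ N / 100 := by
    rw [le_div_iff₀' (by norm_num)]
    exact_mod_cast hk
  calc (#(smallSets α k) * #(matchingFreeSets σ) : ℝ)
      ≤ Real.exp (k * Real.log 20 + N / 20) * Real.exp (N * (4 / 5 * Real.log 2)) := by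
        gcongr
        · exact card_smallSets_le_exp (by norm_num) k
        · exact card_matchingFreeSets_le_exp hσ hfix
    _ ≤ Real.exp (N / 100 * (5 * Real.log 2) + N / 20) *
          Real.exp (N * (4 / 5 * Real.log 2)) := by gcongr
    _ ≤ Real.exp (N * Real.log 2 - N / 100) := by
        rw [← Real.exp_add, Real.exp_le_exp]
        nlinarith [Real.log_two_gt_d9, N.cast_nonneg (α := ℝ)]
    _ = 2 ^ N * Real.exp (-(N / 100)) := by
        rw [sub_eq_add_neg, Real.exp_add, Real.exp_nat_mul, Real.exp_log two_pos]

theorem IsRegularNbhd.card_nonAdjPairs_le_exp_of_card_le (h : IsRegularNbhd nb d)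
    (hs : 1000 ≤ s) (hd : 1 ≤ d) (hlog : 1000 * Real.log d ≤ s) (hcube : s ^ 3 ≤ √d)
    (hN : 200 * (√d * s) ≤ Fintype.card α) (htN : t ≤ Fintype.card α)
    (ht : Fintype.card α ≤ 200 * √d * t) :
    (#(nonAdjPairs nb t) : ℝ) ≤
      2 * (2 ^ Fintype.card α * Real.exp (-(Fintype.card α / (200 * (√d * s))))) := by
  have : 0 < √(d : ℝ) := Real.sqrt_pos.2 (by exact_mod_cast hd)
  have hst : s ≤ t := by
    refine le_of_mul_le_mul_left ?_ (show 0 < 200 * √d by positivity)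
    linarith
  have hcubeN : s ^ 3 * Fintype.card α ≤ 200 * d * t := by
    calc s ^ 3 * Fintype.card α ≤ √d * (200 * √d * t) := by gcongr
      _ = 200 * (√d * √d) * t := by ring
      _ = 200 * d * t := by rw [Real.mul_self_sqrt d.cast_nonneg]
  refine (h.card_nonAdjPairs_le_exp hs hd hlog htN hst hcubeN).trans ?_
  gcongr 2 * (2 ^ Fintype.card α * Real.exp (-?_))
  calc Fintype.card α / (200 * (√d * s)) ≤ 200 * √d * t / (200 * (√d * s)) := by gcongr
    _ = t / s := by field_simp

theorem IsRegularNbhd.card_matchingFreePairs_le_exp (h : IsRegularNbhd nb d) {σ : α → α}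
    (hσ : Function.Involutive σ) (hfix : ∀ u, σ u ≠ u) (hs : 1000 ≤ s) (hd : 1 ≤ d)
    (hlog : 1000 * Real.log d ≤ s) (hcube : s ^ 3 ≤ √d)
    (hN : 200 * (√d * s) ≤ Fintype.card α)
    (hiso : ∀ A, Fintype.card α ≤ 100 * #(nonNbrs nb (nonNbrs nb A)) →
      Fintype.card α ≤ 100 * #(nonNbrs nb A) → Fintype.card α ≤ 200 * √d * defect nb A) :
    (#(matchingFreePairs nb σ) : ℝ) ≤ (2 * Fintype.card α + 4) *
      (2 ^ Fintype.card α * Real.exp (-(Fintype.card α / (200 * (√d * s))))) := by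
  set N := Fintype.card α
  set W := (2 : ℝ) ^ N * Real.exp (-(N / (200 * (√d * s))))
  set t₀ := ⌈N / (200 * √d)⌉₊
  have hr : 1 ≤ √d := Real.one_le_sqrt.2 (by exact_mod_cast hd)
  have hcount := card_matchingFreePairs_le h.symm σ (k := N / 100) (t₀ := t₀) fun A hA hF ↦ by
    refine Nat.ceil_le.2 ((div_le_iff₀' (by positivity)).2 (hiso A ?_ ?_)) <;> omega
  have hsmall : (#(smallSets α (N / 100)) * #(matchingFreeSets σ) : ℝ) ≤ W := by
    refine (card_smallSets_mul_card_matchingFreeSets_le_exp hσ hfix (Nat.mul_div_le N 100)).trans ?_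
    simp only [W]
    gcongr
    nlinarith
  have hpairs : ∀ t ∈ Icc t₀ N, (#(nonAdjPairs nb t) : ℝ) ≤ 2 * W := fun t ht ↦
    h.card_nonAdjPairs_le_exp_of_card_le hs hd hlog hcube hN (mem_Icc.1 ht).2 <|
      (div_le_iff₀' (by positivity)).1 (Nat.ceil_le.1 (mem_Icc.1 ht).1)
  calc (#(matchingFreePairs nb σ) : ℝ)
      ≤ 2 * (#(smallSets α (N / 100)) * #(matchingFreeSets σ)) +
          ∑ t ∈ Icc t₀ N, (#(nonAdjPairs nb t) : ℝ) := by exact_mod_cast hcount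
    _ ≤ 2 * W + #(Icc t₀ N) • (2 * W) := by
        gcongr
        exact sum_le_card_nsmul _ _ _ hpairs
    _ ≤ 2 * W + (N + 1 : ℕ) • (2 * W) := by
        gcongr
        rw [Nat.card_Icc]
        exact Nat.sub_le _ _
    _ = (2 * N + 4) * W := by
        rw [nsmul_eq_mul]
        push_cast
        ring

end ExponentialBounds

section Hypercube

open Filter

theorem card_matchingFreePairs_closedNbhd_le {m n : ℕ} (hn : n = m + 1) {z : V m} (hz : z ≠ 0)
    {s : ℝ} (hs : 1000 ≤ s) (hlog : 1000 * Real.log n ≤ s) (hcube : s ^ 3 ≤ √n)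
    (hN : 200 * (√n * s) ≤ 2 ^ m) :
    (#(matchingFreePairs closedNbhd (· + z)) : ℝ) ≤
      (2 * 2 ^ m + 4) * (2 ^ 2 ^ m * Real.exp (-(2 ^ m / (200 * (√n * s))))) := by
  have hcard : (Fintype.card (V m) : ℝ) = 2 ^ m := by exact_mod_cast card_V m
  have hinv : Function.Involutive (· + z) := fun u ↦ by
    simp only [add_assoc, ZModModule.add_self, add_zero]
  have hfix (u : V m) : u + z ≠ u := by simpa using hz
  have hreg : IsRegularNbhd (closedNbhd (m := m)) n := hn ▸ isRegularNbhd_closedNbhd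
  have hbound := hreg.card_matchingFreePairs_le_exp hinv hfix hs (by omega) hlog hcube
    (by rwa [hcard]) fun A hA hF ↦ by
      have hk (B : Finset (V m)) (hB : Fintype.card (V m) ≤ 100 * #B) : (2 : ℝ) ^ m / 100 ≤ #B := by
        rw [div_le_iff₀' (by norm_num), ← hcard]
        exact_mod_cast hB
      have hiso := half_le_defect_closedNbhd_mul_sqrt A (by positivity) (hk _ hA) (hk _ hF)
      have hsqrt : √m ≤ √n := Real.sqrt_le_sqrt (by exact_mod_cast hn.ge.trans' m.le_succ)
      have := mul_le_mul_of_nonneg_left hsqrt (defect closedNbhd A).cast_nonneg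
      rw [hcard]
      linarith
  rwa [hcard, card_V] at hbound

theorem eventually_sqrt_mul_log_le {κ : ℝ} (hκ : 0 < κ) :
    ∀ᶠ n : ℕ in atTop, √n * Real.log n ≤ κ * 2 ^ ((n : ℝ) / 2) := by
  have htendsto := tendsto_pow_const_div_const_pow_of_one_lt 2
    (Real.lt_sqrt_of_sq_lt (show (1 : ℝ) ^ 2 < 2 by norm_num))
  filter_upwards [htendsto.eventually_le_const hκ, eventually_ge_atTop 1] with n hn hn₁
  have hn₁' : (1 : ℝ) ≤ n := by exact_mod_cast hn₁
  have hpow : (2 : ℝ) ^ ((n : ℝ) / 2) = √2 ^ n := by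
    rw [Real.sqrt_eq_rpow, ← Real.rpow_natCast, ← Real.rpow_mul two_pos.le]
    ring_nf
  calc √n * Real.log n ≤ n * n := by
        gcongr
        · exact Real.sqrt_le_self_iff.2 (.inr hn₁')
        · exact Real.log_le_self n.cast_nonneg
    _ ≤ κ * 2 ^ ((n : ℝ) / 2) := by
        rw [hpow, ← sq]
        exact (div_le_iff₀ (by positivity)).1 hn

theorem eventually_one_le_log : ∀ᶠ n : ℕ in atTop, 1 ≤ Real.log n :=
  (Real.tendsto_log_atTop.comp tendsto_natCast_atTop_atTop).eventually_ge_atTop 1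

theorem two_rpow_half_sq (n : ℕ) : ((2 : ℝ) ^ ((n : ℝ) / 2)) ^ 2 = 2 ^ n := by
  rw [← Real.rpow_mul_natCast two_pos.le, Nat.cast_ofNat, div_mul_cancel₀ _ two_ne_zero,
    Real.rpow_natCast]

theorem eventually_two_rpow_half_le {κ : ℝ} (hκ : 0 < κ) :
    ∀ᶠ n : ℕ in atTop, (2 : ℝ) ^ ((n : ℝ) / 2) ≤ κ * 2 ^ n / (√n * Real.log n) := by
  filter_upwards [eventually_sqrt_mul_log_le hκ, eventually_one_le_log, eventually_ge_atTop 1]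
    with n hn hlog hn₁
  rw [le_div_iff₀ (by positivity), ← two_rpow_half_sq]
  calc (2 : ℝ) ^ ((n : ℝ) / 2) * (√n * Real.log n)
      ≤ 2 ^ ((n : ℝ) / 2) * (κ * 2 ^ ((n : ℝ) / 2)) := by gcongr
    _ = κ * (2 ^ ((n : ℝ) / 2)) ^ 2 := by ring

theorem eventually_mul_log_pow_le_sqrt (C : ℝ) (k : ℕ) :
    ∀ᶠ n : ℕ in atTop, (C * Real.log n) ^ k ≤ √n := by
  have hlittle : (fun x : ℝ ↦ (C * Real.log x) ^ k) =o[atTop] fun x ↦ √x := by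
    simpa only [mul_pow, Real.rpow_natCast, Real.sqrt_eq_rpow] using
      (isLittleO_log_rpow_rpow_atTop k one_half_pos).const_mul_left (C ^ k)
  filter_upwards [tendsto_natCast_atTop_atTop.eventually (hlittle.bound one_pos)] with n hn
  rw [one_mul, Real.norm_of_nonneg (Real.sqrt_nonneg _)] at hn
  exact (le_abs_self _).trans hn

theorem sq_add_four_le_exp {x : ℝ} (hx : 8 ≤ x) : x ^ 2 + 4 ≤ Real.exp x := by
  have hcubic := Real.pow_div_factorial_le_exp x (by linarith) 3
  refine le_trans ?_ hcubic
  rw [le_div_iff₀ (by positivity)]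
  norm_num [Nat.factorial]
  nlinarith

theorem eventually_two_pow_add_four_le_exp {κ : ℝ} (hκ : 0 < κ) :
    ∀ᶠ n : ℕ in atTop, (2 : ℝ) ^ n + 4 ≤ Real.exp (κ * 2 ^ n / (√n * Real.log n)) := by
  filter_upwards [eventually_two_rpow_half_le hκ, eventually_ge_atTop 6] with n hhalf hn
  have hexponent : (3 : ℝ) ≤ (n : ℝ) / 2 := by
    rw [le_div_iff₀ two_pos]
    exact_mod_cast hn
  have hlarge : 8 ≤ (2 : ℝ) ^ ((n : ℝ) / 2) := by
    calc (8 : ℝ) = 2 ^ (3 : ℝ) := by norm_num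
      _ ≤ 2 ^ ((n : ℝ) / 2) := Real.rpow_le_rpow_of_exponent_le one_le_two hexponent
  calc (2 : ℝ) ^ n + 4 = (2 ^ ((n : ℝ) / 2)) ^ 2 + 4 := by rw [two_rpow_half_sq]
    _ ≤ Real.exp (2 ^ ((n : ℝ) / 2)) := sq_add_four_le_exp hlarge
    _ ≤ Real.exp (κ * 2 ^ n / (√n * Real.log n)) := Real.exp_le_exp.2 hhalf

theorem exp_neg_le_two_rpow_neg {y : ℝ} (hy : 0 ≤ y) : Real.exp (-y) ≤ 2 ^ (-y) := by
  rw [Real.rpow_def_of_pos two_pos, Real.exp_le_exp]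
  nlinarith [Real.log_two_lt_d9]

theorem eventually_card_matchingFreePairs_closedNbhd_le :
    ∀ᶠ n : ℕ in atTop, ∀ m, n = m + 1 → ∀ z : V m, z ≠ 0 →
      (#(matchingFreePairs closedNbhd (· + z)) : ℝ) ≤
        (2 ^ n + 4) * (2 ^ 2 ^ m * Real.exp (-(2 ^ n / (400000 * (√n * Real.log n))))) := by
  filter_upwards [eventually_one_le_log, eventually_mul_log_pow_le_sqrt 1000 3,
    eventually_two_rpow_half_le (show (0 : ℝ) < 1 / 400000 by norm_num)] with n hlog hcube hN
  rintro m rfl z hz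
  have hone : 1 ≤ (2 : ℝ) ^ (((m + 1 : ℕ) : ℝ) / 2) := Real.one_le_rpow one_le_two (by positivity)
  have hsize : 200 * (√(m + 1 : ℕ) * (1000 * Real.log (m + 1 : ℕ))) ≤ 2 ^ m := by
    have := (le_div_iff₀ (by positivity)).1 (hone.trans hN)
    rw [pow_succ] at this
    linarith
  refine (card_matchingFreePairs_closedNbhd_le rfl hz (by linarith) le_rfl hcube hsize).trans_eq ?_
  rw [pow_succ' (2 : ℝ) m]
  congr 4
  field_simp
  norm_num

theorem count_indep_sets_hypercube_plus_matching_general :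
    ∃ κ : ℝ, 0 < κ ∧ ∀ᶠ n : ℕ in atTop, ∀ v : V n, v ≠ 0 → Even (hammingNorm v) →
      ({I : Finset (V n) | ∀ x ∈ I, ∀ y ∈ I, ¬ (QCay n v).Adj x y}.ncard : ℝ) ≤
        2 ^ (((2 ^ (n - 1) : ℕ) : ℝ) - κ * 2 ^ n / (√n * Real.log n)) := by
  refine ⟨1 / 800000, by norm_num, ?_⟩
  filter_upwards [eventually_card_matchingFreePairs_closedNbhd_le, eventually_one_le_log,
    eventually_two_pow_add_four_le_exp (show (0 : ℝ) < 1 / 800000 by norm_num),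
    eventually_ge_atTop 1] with n hpairs hlog hfactor hn v hv heven
  obtain ⟨m, rfl⟩ : ∃ m, n = m + 1 := ⟨n - 1, by omega⟩
  obtain ⟨z, hz, hfold⟩ := exists_ncard_le_card_matchingFreePairs hv heven
  set y := 1 / 800000 * (2 : ℝ) ^ (m + 1) / (√(m + 1 : ℕ) * Real.log (m + 1 : ℕ))
  have hy : 0 ≤ y := by positivity
  have hsplit : -((2 : ℝ) ^ (m + 1) / (400000 * (√(m + 1 : ℕ) * Real.log (m + 1 : ℕ)))) =
      -y + -y := by
    simp only [y]
    field_simp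
    norm_num
  calc _ ≤ (#(matchingFreePairs closedNbhd (· + z)) : ℝ) := by exact_mod_cast hfold
    _ ≤ (2 ^ (m + 1) + 4) * (2 ^ 2 ^ m * (Real.exp (-y) * Real.exp (-y))) := by
        rw [← Real.exp_add, ← hsplit]
        exact hpairs m rfl z hz
    _ ≤ Real.exp y * (2 ^ 2 ^ m * (Real.exp (-y) * 2 ^ (-y))) := by
        gcongr
        exact exp_neg_le_two_rpow_neg hy
    _ = Real.exp y * Real.exp (-y) * (2 ^ 2 ^ m * 2 ^ (-y)) := by ring
    _ = 2 ^ (((2 ^ (m + 1 - 1) : ℕ) : ℝ) - y) := by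
        rw [← Real.exp_add, add_neg_cancel, Real.exp_zero, one_mul, sub_eq_add_neg,
          Real.rpow_add two_pos, Real.rpow_natCast, Nat.add_sub_cancel]

end Hypercube

/-- There are `c > 0` and `n₀` such that for all `n ≥ n₀` and every nonzero `v` of
even Hamming weight, the number of independent sets in `Qₙ ∪ Γ_{F₂ⁿ}(v)` is at
most `2^(2^(n−1) − 2^(n/2 − c·√n))`. -/
theorem count_indep_sets_hypercube_plus_matching :
    ∃ c : ℝ, 0 < c ∧ ∃ n₀ : ℕ, ∀ n : ℕ, n₀ ≤ n →
      ∀ v : V n, v ≠ 0 → Even (hammingNorm v) →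
      ({I : Finset (V n) | ∀ x ∈ I, ∀ y ∈ I, ¬ (QCay n v).Adj x y}.ncard : ℝ) ≤
        2 ^ (((2 ^ (n - 1) : ℕ) : ℝ) - (2 : ℝ) ^ ((n : ℝ) / 2 - c * Real.sqrt n)) := by
  obtain ⟨κ, hκ, hcount⟩ := count_indep_sets_hypercube_plus_matching_general
  obtain ⟨n₀, hn₀⟩ := Filter.eventually_atTop.1 (hcount.and (eventually_two_rpow_half_le hκ))
  refine ⟨1, one_pos, n₀, fun n hn v hv heven ↦ ((hn₀ n hn).1 v hv heven).trans ?_⟩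
  have hexponent : (2 : ℝ) ^ ((n : ℝ) / 2 - 1 * √n) ≤ κ * 2 ^ n / (√n * Real.log n) :=
    (Real.rpow_le_rpow_of_exponent_le one_le_two
      (sub_le_self _ (mul_nonneg one_pos.le (Real.sqrt_nonneg _)))).trans (hn₀ n hn).2
  gcongr
  exact one_le_two
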